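/- Let f, g : I → ℝ be continuous and strictly monotone. Then A^[f] ≤ A^[g] if and only if for all x, y, z ∈ I with x < y < z one has (f(x) − f(y))/(f(x) − f(z)) ≥ (g(x) − g(y))/(g(x) − g(z)). -/

import Mathlib

/-!
Replacing a generator by its negative changes neither its means nor its quotients
`(f x - f y) / (f x - f z)`, so both generators may be taken strictly increasing.

The quotients are then detected by two-valued vectors: if `a` consists of `k` copies of `x` and `m`
copies of `z`, then `y < A^[f](a)` exactly when `(f x - f y) / (f x - f z) < m / (k + m)`. If the
inequality between the quotients of `f` and `g` fails at `x < y < z`, a rational `m / (k + m)`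
strictly between them yields a vector with `A^[g](a) < y < A^[f](a)`.

Conversely, the inequality between the quotients says that the slopes of `g ∘ f⁻¹` increase. Hence
`g ∘ f⁻¹` is convex, and Jensen's inequality compares the two means.
-/

open Set Function Filter

/-- The quasi-arithmetic mean generated by `f` on the interval `I`,
applied to a vector `a ∈ Iⁿ`: `f⁻¹((f a₁ + ⋯ + f aₙ)/n)`, where the
inverse of `f` is taken on `I`. -/
noncomputable def qam (I : Set ℝ) (f : ℝ → ℝ) {n : ℕ} (a : Fin n → ℝ) : ℝ :=
  Function.invFunOn f I ((∑ i, f (a i)) / n)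

/-- The natural (pointwise) partial order on quasi-arithmetic means:
`A^[f] ≤ A^[g]` iff `A^[f](a) ≤ A^[g](a)` for every `n ≥ 1` and every `a ∈ Iⁿ`. -/
def qamLE (I : Set ℝ) (f g : ℝ → ℝ) : Prop :=
  ∀ n : ℕ, 1 ≤ n → ∀ a : Fin n → ℝ, (∀ i, a i ∈ I) → qam I f a ≤ qam I g a

/-- `A^[f] = A^[g]` : equality of the two quasi-arithmetic means as means. -/
def qamEQ (I : Set ℝ) (f g : ℝ → ℝ) : Prop :=
  ∀ n : ℕ, 1 ≤ n → ∀ a : Fin n → ℝ, (∀ i, a i ∈ I) → qam I f a = qam I g a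

/-- `f` is strictly monotone on `I` (strictly increasing or strictly decreasing). -/
def StrictMonoOrAntiOn (f : ℝ → ℝ) (I : Set ℝ) : Prop :=
  StrictMonoOn f I ∨ StrictAntiOn f I

section PalesCondition

variable {α 𝕜 : Type*} [Preorder α] [DivisionRing 𝕜] {s : Set α} {f g : α → 𝕜}

/-- Páles' relation between two generators on `s`, the criterion comparing their quasi-arithmetic
means. No quotient is a junk value `a / 0 = 0` when `f` and `g` are injective on `s`. -/
def PalesCondition [LE 𝕜] (s : Set α) (f g : α → 𝕜) : Prop :=
  ∀ x ∈ s, ∀ y ∈ s, ∀ z ∈ s, x < y → y < z →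
    (f x - f y) / (f x - f z) ≥ (g x - g y) / (g x - g z)

lemma neg_sub_neg_div_neg_sub_neg (a b c : 𝕜) : (-a - -b) / (-a - -c) = (a - b) / (a - c) := by
  rw [neg_sub_neg, neg_sub_neg, ← neg_sub a b, ← neg_sub a c, neg_div_neg_eq]

lemma palesCondition_neg_left [LE 𝕜] : PalesCondition s (-f) g ↔ PalesCondition s f g := by
  simp only [PalesCondition, Pi.neg_apply, neg_sub_neg_div_neg_sub_neg]

lemma palesCondition_neg_right [LE 𝕜] : PalesCondition s f (-g) ↔ PalesCondition s f g := by
  simp only [PalesCondition, Pi.neg_apply, neg_sub_neg_div_neg_sub_neg]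

end PalesCondition

section Convexity

variable {α 𝕜 : Type*} [LinearOrder α] [Field 𝕜] [LinearOrder 𝕜] [IsStrictOrderedRing 𝕜]
  {s : Set α} {f g : α → 𝕜}

lemma sub_div_sub_le_sub_div_sub_iff_slope_le {a b c a' b' c' : 𝕜} (hab : a < b) (hbc : b < c)
    (hac' : a' < c') :
    (a' - b') / (a' - c') ≤ (a - b) / (a - c) ↔ (b' - a') / (b - a) ≤ (c' - b') / (c - b) := by
  rw [← neg_div_neg_eq (a' - b'), ← neg_div_neg_eq (a - b), neg_sub, neg_sub, neg_sub, neg_sub,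
    div_le_div_iff₀ (sub_pos.2 hac') (sub_pos.2 (hab.trans hbc)),
    div_le_div_iff₀ (sub_pos.2 hab) (sub_pos.2 hbc)]
  constructor <;> intro h <;> linarith

lemma PalesCondition.convexOn_comp_invFunOn [Nonempty α] (h : PalesCondition s f g)
    (hs : Convex 𝕜 (f '' s)) (hf : StrictMonoOn f s) (hg : StrictMonoOn g s) :
    ConvexOn 𝕜 (f '' s) (g ∘ invFunOn f s) := by
  refine convexOn_of_slope_mono_adjacent hs fun {p q r} hp hr hpq hqr => ?_
  have hq : q ∈ f '' s := hs.ordConnected.out hp hr ⟨hpq.le, hqr.le⟩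
  obtain ⟨x, hx, rfl⟩ := hp
  obtain ⟨y, hy, rfl⟩ := hq
  obtain ⟨z, hz, rfl⟩ := hr
  have hxy : x < y := (hf.lt_iff_lt hx hy).1 hpq
  have hyz : y < z := (hf.lt_iff_lt hy hz).1 hqr
  have hinv := hf.injOn.leftInvOn_invFunOn
  rw [comp_apply, comp_apply, comp_apply, hinv hx, hinv hy, hinv hz,
    ← sub_div_sub_le_sub_div_sub_iff_slope_le hpq hqr (hg hx hz (hxy.trans hyz))]
  exact h x hx y hy z hz hxy hyz

end Convexity

section NegatedGenerator

variable {I : Set ℝ} {f g : ℝ → ℝ}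

lemma invFunOn_comp_of_injective {α β γ : Type*} [Nonempty α] {e : β → γ} (he : Injective e)
    (f : α → β) (s : Set α) (b : β) : invFunOn (e ∘ f) s (e b) = invFunOn f s b := by
  have h : ∀ a, e (f a) = e b ↔ f a = b := fun a => he.eq_iff
  unfold invFunOn
  congr! 4 <;> simp only [comp_apply, h]

lemma qam_neg {n : ℕ} (a : Fin n → ℝ) : qam I (-f) a = qam I f a := by
  simp only [qam, Pi.neg_apply, Finset.sum_neg_distrib, neg_div]
  exact invFunOn_comp_of_injective neg_injective f I _

lemma qamLE_neg_left : qamLE I (-f) g ↔ qamLE I f g := by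
  simp only [qamLE, qam_neg]

lemma qamLE_neg_right : qamLE I f (-g) ↔ qamLE I f g := by
  simp only [qamLE, qam_neg]

lemma convex_image_neg {α 𝕜 E : Type*} [Ring 𝕜] [PartialOrder 𝕜] [AddCommGroup E] [Module 𝕜 E]
    {f : α → E} {s : Set α} (hf : Convex 𝕜 (f '' s)) : Convex 𝕜 ((-f) '' s) := by
  have h : (-f) '' s = -(f '' s) := by rw [← image_neg_eq_neg, image_image]; rfl
  exact h ▸ hf.neg

end NegatedGenerator

section Average

variable {ι 𝕜 : Type*} [Field 𝕜] {t : Finset ι} {p : ι → 𝕜} {s : Set 𝕜} {φ : 𝕜 → 𝕜}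

lemma centerMass_one (t : Finset ι) (p : ι → 𝕜) :
    t.centerMass (fun _ => (1 : 𝕜)) p = (∑ i ∈ t, p i) / t.card := by
  simp [Finset.centerMass, div_eq_inv_mul]

variable [LinearOrder 𝕜] [IsStrictOrderedRing 𝕜]

lemma average_mem_of_convex (hs : Convex 𝕜 s) (ht : t.Nonempty) (hp : ∀ i ∈ t, p i ∈ s) :
    (∑ i ∈ t, p i) / t.card ∈ s := by
  rw [← centerMass_one]
  exact hs.centerMass_mem (fun _ _ => zero_le_one) (by simpa using ht) hp

lemma map_average_le_of_convexOn (hφ : ConvexOn 𝕜 s φ) (ht : t.Nonempty)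
    (hp : ∀ i ∈ t, p i ∈ s) :
    φ ((∑ i ∈ t, p i) / t.card) ≤ (∑ i ∈ t, φ (p i)) / t.card := by
  rw [← centerMass_one, ← centerMass_one]
  exact hφ.map_centerMass_le (fun _ _ => zero_le_one) (by simpa using ht) hp

end Average

section Mean

variable {I : Set ℝ} {f g : ℝ → ℝ} {n : ℕ} {a : Fin n → ℝ} {y : ℝ}

lemma average_mem_image (hf : Convex ℝ (f '' I)) (hn : 0 < n) (ha : ∀ i, a i ∈ I) :
    (∑ i, f (a i)) / n ∈ f '' I := by
  have : NeZero n := ⟨hn.ne'⟩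
  simpa using average_mem_of_convex hf Finset.univ_nonempty fun i _ => mem_image_of_mem f (ha i)

lemma qam_mem (hf : Convex ℝ (f '' I)) (hn : 0 < n) (ha : ∀ i, a i ∈ I) : qam I f a ∈ I :=
  invFunOn_mem (average_mem_image hf hn ha)

lemma apply_qam (hf : Convex ℝ (f '' I)) (hn : 0 < n) (ha : ∀ i, a i ∈ I) :
    f (qam I f a) = (∑ i, f (a i)) / n :=
  invFunOn_eq (average_mem_image hf hn ha)

lemma lt_qam_iff (hf : Convex ℝ (f '' I)) (hfm : StrictMonoOn f I) (hn : 0 < n)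
    (ha : ∀ i, a i ∈ I) (hy : y ∈ I) : y < qam I f a ↔ f y < (∑ i, f (a i)) / n := by
  rw [← apply_qam hf hn ha, hfm.lt_iff_lt hy (qam_mem hf hn ha)]

lemma qam_lt_iff (hf : Convex ℝ (f '' I)) (hfm : StrictMonoOn f I) (hn : 0 < n)
    (ha : ∀ i, a i ∈ I) (hy : y ∈ I) : qam I f a < y ↔ (∑ i, f (a i)) / n < f y := by
  rw [← apply_qam hf hn ha, hfm.lt_iff_lt (qam_mem hf hn ha) hy]

lemma qamLE_of_convexOn_comp_invFunOn (h : ConvexOn ℝ (f '' I) (g ∘ invFunOn f I))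
    (hf : InjOn f I) (hg : Convex ℝ (g '' I)) (hgm : StrictMonoOn g I) : qamLE I f g := by
  intro n (hn : 0 < n) a ha
  have : NeZero n := ⟨hn.ne'⟩
  have jensen : g (qam I f a) ≤ (∑ i, g (a i)) / n := by
    simpa [qam, hf.leftInvOn_invFunOn (ha _)] using
      map_average_le_of_convexOn h Finset.univ_nonempty fun i _ => mem_image_of_mem f (ha i)
  rwa [← apply_qam hg hn ha, hgm.le_iff_le (qam_mem h.1 hn ha) (qam_mem hg hn ha)] at jensen

end Mean

lemma exists_natCast_div_add_btwn {𝕜 : Type*} [Field 𝕜] [LinearOrder 𝕜] [IsStrictOrderedRing 𝕜]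
    [Archimedean 𝕜] {a b : 𝕜} (ha : 0 ≤ a) (hab : a < b) (hb : b ≤ 1) :
    ∃ k m : ℕ, 0 < k + m ∧ a < m / (k + m) ∧ (m : 𝕜) / (k + m) < b := by
  obtain ⟨q, haq, hqb⟩ := exists_rat_btwn hab
  lift q to ℚ≥0 using mod_cast ha.trans haq.le
  have hq : ((q : ℚ) : 𝕜) = q.num / q.den := by rw [Rat.cast_nnratCast, NNRat.cast_def]
  have hle : q.num ≤ q.den := by
    have hq_lt_one := hqb.trans_le hb
    rw [hq, div_lt_one (mod_cast q.den_pos)] at hq_lt_one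
    exact_mod_cast hq_lt_one.le
  have hadd : ((q.den - q.num : ℕ) : 𝕜) + q.num = q.den := by
    rw [← Nat.cast_add, Nat.sub_add_cancel hle]
  refine ⟨q.den - q.num, q.num, ?_, ?_, ?_⟩
  · simpa only [Nat.sub_add_cancel hle] using q.den_pos
  · rwa [hadd, ← hq]
  · rwa [hadd, ← hq]

section TwoPoint

variable {α : Type*}

/-- The vector consisting of `k` copies of `x` followed by `m` copies of `z`, whose
quasi-arithmetic means are those of `x` and `z` with weights `k / (k + m)` and `m / (k + m)`. -/
def twoPoint (k : ℕ) (x : α) (m : ℕ) (z : α) : Fin (k + m) → α :=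
  Fin.append (fun _ => x) (fun _ => z)

lemma twoPoint_mem {s : Set α} {x z : α} (hx : x ∈ s) (hz : z ∈ s) (k m : ℕ) (i : Fin (k + m)) :
    twoPoint k x m z i ∈ s := by
  cases i using Fin.addCases <;> simpa [twoPoint]

lemma sum_comp_twoPoint {M : Type*} [AddCommMonoid M] (f : α → M) (k : ℕ) (x : α) (m : ℕ) (z : α) :
    ∑ i, f (twoPoint k x m z i) = k • f x + m • f z := by
  simp [twoPoint, Fin.sum_univ_add]

variable {I : Set ℝ} {f g : ℝ → ℝ} {x y z : ℝ} {k m : ℕ}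

lemma lt_qam_twoPoint_iff (hf : Convex ℝ (f '' I)) (hfm : StrictMonoOn f I) (hx : x ∈ I)
    (hy : y ∈ I) (hz : z ∈ I) (hxz : x < z) (hkm : 0 < k + m) :
    y < qam I f (twoPoint k x m z) ↔ (f x - f y) / (f x - f z) < m / (k + m) := by
  have hfxz : 0 < f z - f x := sub_pos.2 (hfm hx hz hxz)
  have hkm' : (0 : ℝ) < k + m := mod_cast hkm
  rw [lt_qam_iff hf hfm hkm (twoPoint_mem hx hz k m) hy, sum_comp_twoPoint, nsmul_eq_mul,
    nsmul_eq_mul, Nat.cast_add, ← neg_div_neg_eq (f x - f y), neg_sub, neg_sub, lt_div_iff₀ hkm',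
    div_lt_div_iff₀ hfxz hkm']
  constructor <;> intro h <;> linarith

lemma qam_twoPoint_lt_iff (hf : Convex ℝ (f '' I)) (hfm : StrictMonoOn f I) (hx : x ∈ I)
    (hy : y ∈ I) (hz : z ∈ I) (hxz : x < z) (hkm : 0 < k + m) :
    qam I f (twoPoint k x m z) < y ↔ m / (k + m) < (f x - f y) / (f x - f z) := by
  have hfxz : 0 < f z - f x := sub_pos.2 (hfm hx hz hxz)
  have hkm' : (0 : ℝ) < k + m := mod_cast hkm
  rw [qam_lt_iff hf hfm hkm (twoPoint_mem hx hz k m) hy, sum_comp_twoPoint, nsmul_eq_mul,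
    nsmul_eq_mul, Nat.cast_add, ← neg_div_neg_eq (f x - f y), neg_sub, neg_sub,
    div_lt_iff₀ hkm', div_lt_div_iff₀ hkm' hfxz]
  constructor <;> intro h <;> linarith

lemma palesCondition_of_qamLE (h : qamLE I f g) (hf : Convex ℝ (f '' I)) (hg : Convex ℝ (g '' I))
    (hfm : StrictMonoOn f I) (hgm : StrictMonoOn g I) : PalesCondition I f g := by
  intro x hx y hy z hz hxy hyz
  have hxz := hxy.trans hyz
  by_contra! hlt
  have hf_nonneg : 0 ≤ (f x - f y) / (f x - f z) :=
    div_nonneg_of_nonpos (sub_nonpos.2 (hfm hx hy hxy).le) (sub_nonpos.2 (hfm hx hz hxz).le)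
  have hg_le_one : (g x - g y) / (g x - g z) ≤ 1 :=
    div_le_one_of_ge (sub_le_sub_left (hgm hy hz hyz).le _) (sub_nonpos.2 (hgm hx hz hxz).le)
  obtain ⟨k, m, hkm, hflt, hltg⟩ := exists_natCast_div_add_btwn hf_nonneg hlt hg_le_one
  have hlow : qam I g (twoPoint k x m z) < y :=
    (qam_twoPoint_lt_iff hg hgm hx hy hz hxz hkm).2 hltg
  have hhigh : y < qam I f (twoPoint k x m z) :=
    (lt_qam_twoPoint_iff hf hfm hx hy hz hxz hkm).2 hflt
  exact (hlow.trans hhigh).not_ge (h _ hkm _ (twoPoint_mem hx hz k m))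

end TwoPoint

theorem qam_le_iff_pales_condition_general {I : Set ℝ} {f g : ℝ → ℝ}
    (hf : Convex ℝ (f '' I)) (hg : Convex ℝ (g '' I))
    (hfm : StrictMonoOrAntiOn f I) (hgm : StrictMonoOrAntiOn g I) :
    qamLE I f g ↔ PalesCondition I f g := by
  wlog hf_mono : StrictMonoOn f I generalizing f
  · have hneg : StrictMonoOn (-f) I := (hfm.resolve_left hf_mono).neg
    rw [← qamLE_neg_left, ← palesCondition_neg_left]
    exact this (convex_image_neg hf) (.inl hneg) hneg
  wlog hg_mono : StrictMonoOn g I generalizing g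
  · have hneg : StrictMonoOn (-g) I := (hgm.resolve_left hg_mono).neg
    rw [← qamLE_neg_right, ← palesCondition_neg_right]
    exact this (convex_image_neg hg) (.inl hneg) hneg
  constructor
  · intro h
    exact palesCondition_of_qamLE h hf hg hf_mono hg_mono
  · intro h
    have hconv := h.convexOn_comp_invFunOn hf hf_mono hg_mono
    exact qamLE_of_convexOn_comp_invFunOn hconv hf_mono.injOn hg hg_mono

/-- Páles' condition: `A^[f] ≤ A^[g]` iff
`(f(x)-f(y))/(f(x)-f(z)) ≥ (g(x)-g(y))/(g(x)-g(z))` for all `x < y < z` in `I`. -/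
theorem qam_le_iff_pales_condition
    (I : Set ℝ) (hI : I.OrdConnected) (hInontriv : ∃ x ∈ I, ∃ y ∈ I, x < y)
    (f g : ℝ → ℝ) (hfc : ContinuousOn f I) (hgc : ContinuousOn g I)
    (hfm : StrictMonoOrAntiOn f I) (hgm : StrictMonoOrAntiOn g I) :
    qamLE I f g ↔
      ∀ x ∈ I, ∀ y ∈ I, ∀ z ∈ I, x < y → y < z →
        (f x - f y) / (f x - f z) ≥ (g x - g y) / (g x - g z) := by
  exact qam_le_iff_pales_condition_general (hI.isPreconnected.image f hfc).convex
    (hI.isPreconnected.image g hgc).convex hfm hgm
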